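/- There exist constants C > 0 and ω₁ ≥ ω₀ such that for every ω ≥ ω₁ and every t ∈ [0, T], the defect of the first-order truncated expansion satisfies ‖ (∂/∂t) Y₁(t; ω) − f(Y₁(t; ω)) − Σ_{m=1}^{M} a_m(t) e^{i κ_m ω t} ‖ ≤ C / ω, and moreover Y₁(0; ω) = y₀ for every ω. -/

import Mathlib

open MeasureTheory

/-!
Differentiating the phases of `ω⁻¹ p_{1,m}(t) e^{iκ_mωt}` brings down a factor `iκ_mω`, and
`p_{1,m} = a_m / (iκ_m)` is chosen so that the resulting term of order one is exactly the forcing.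
What remains of the defect is `f(p_{0,0}) - f(Y₁)` plus `ω⁻¹` times a bounded function. The
trajectory of `p_{0,0}` is compact and `Y₁` is uniformly `O(ω⁻¹)`-close to it, so the difference of
the values of `f` is also `O(ω⁻¹)` by a Lipschitz estimate uniform near the trajectory.
-/

open Set Filter Topology
open scoped NNReal

theorem exists_eventually_dist_le_mul_of_locallyLipschitz {α β : Type*} [PseudoMetricSpace α]
    [PseudoMetricSpace β] {f : α → β} {K : Set α} (hf : LocallyLipschitz f) (hK : IsCompact K) :
    ∃ L : ℝ≥0, ∀ᶠ δ in 𝓝[>] (0 : ℝ), ∀ x ∈ K, ∀ y ∈ Metric.ball x δ,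
      dist (f x) (f y) ≤ L * dist x y := by
  refine hK.induction_on ⟨0, by simp⟩ ?_ ?_ fun x _ => ?_
  · rintro s t hst ⟨L, hL⟩
    exact ⟨L, hL.mono fun δ hδ x hx => hδ x (hst hx)⟩
  · rintro s t ⟨L, hL⟩ ⟨L', hL'⟩
    refine ⟨max L L', ?_⟩
    filter_upwards [hL, hL'] with δ hδ hδ' x hx y hy
    rcases hx with hx | hx
    · exact (hδ x hx y hy).trans (by gcongr; exact le_max_left L L')
    · exact (hδ' x hx y hy).trans (by gcongr; exact le_max_right L L')
  · obtain ⟨L, u, hu, hLu⟩ := hf x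
    obtain ⟨ε, hε, hεu⟩ := Metric.mem_nhds_iff.1 hu
    refine ⟨Metric.ball x (ε / 2),
      mem_nhdsWithin_of_mem_nhds (Metric.ball_mem_nhds x (half_pos hε)), L, ?_⟩
    filter_upwards [Ioo_mem_nhdsGT (half_pos hε)] with δ hδ y hy z hz
    refine hLu.dist_le_mul y (hεu ?_) z (hεu ?_)
    · exact Metric.ball_subset_ball (half_le_self hε.le) hy
    · calc dist z x ≤ dist z y + dist y x := dist_triangle z y x
        _ < ε / 2 + ε / 2 := add_lt_add (hz.trans hδ.2) hy
        _ = ε := add_halves ε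

theorem contDiffOn_one_of_hasDerivWithinAt {F : Type*} [NormedAddCommGroup F] [NormedSpace ℝ F]
    {q q' : ℝ → F} {s : Set ℝ} (hs : UniqueDiffOn ℝ s)
    (hq : ∀ t ∈ s, HasDerivWithinAt q (q' t) s t) (hq' : ContinuousOn q' s) :
    ContDiffOn ℝ 1 q s :=
  (contDiffOn_one_iff_derivWithin hs).2
    ⟨fun t ht => (hq t ht).differentiableWithinAt,
      hq'.congr fun t ht => (hq t ht).derivWithin (hs t ht)⟩

/-- The term `ω • g` is the fast part of the derivative of `z`; in `p + ω⁻¹ • z` it becomes the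
forcing `g`. -/
theorem exists_eventually_norm_defect_le {F : Type*} [NormedAddCommGroup F] [NormedSpace ℝ F]
    {f : F → F} (hf : LocallyLipschitz f) {s : Set ℝ} (hsc : IsCompact s) (hsu : UniqueDiffOn ℝ s)
    {p : ℝ → F} (hp : ∀ t ∈ s, HasDerivWithinAt p (f (p t)) s t) {z g w : ℝ → ℝ → F}
    (hz : ∀ ω, ∀ t ∈ s, HasDerivWithinAt (z ω) (ω • g ω t + w ω t) s t)
    (hz_bdd : ∃ Z, ∀ ω, ∀ t ∈ s, ‖z ω t‖ ≤ Z) (hw_bdd : ∃ W, ∀ ω, ∀ t ∈ s, ‖w ω t‖ ≤ W) :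
    ∃ C > 0, ∀ᶠ ω : ℝ in atTop, ∀ t ∈ s,
      ‖derivWithin (fun t => p t + ω⁻¹ • z ω t) s t - f (p t + ω⁻¹ • z ω t) - g ω t‖ ≤ C / ω := by
  obtain ⟨Z, hZ⟩ := hz_bdd
  obtain ⟨W, hW⟩ := hw_bdd
  have hpc : ContinuousOn p s := fun t ht => (hp t ht).continuousWithinAt
  obtain ⟨L, hL⟩ :=
    exists_eventually_dist_le_mul_of_locallyLipschitz hf (hsc.image_of_continuousOn hpc)
  obtain ⟨δ, hLδ, hδ⟩ := (hL.and self_mem_nhdsWithin).exists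
  refine ⟨|L * Z + W| + 1, by positivity, ?_⟩
  filter_upwards [eventually_gt_atTop 0, eventually_gt_atTop (Z / δ)] with ω hω hZω t ht
  have hderiv : derivWithin (fun t => p t + ω⁻¹ • z ω t) s t = f (p t) + (g ω t + ω⁻¹ • w ω t) := by
    rw [((hp t ht).fun_add ((hz ω t ht).fun_const_smul ω⁻¹)).derivWithin (hsu t ht), smul_add,
      inv_smul_smul₀ hω.ne']
  have hinv_smul {v : F} {V : ℝ} (hv : ‖v‖ ≤ V) : ‖ω⁻¹ • v‖ ≤ V / ω := by
    rw [norm_smul, norm_inv, Real.norm_of_nonneg hω.le, inv_mul_eq_div]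
    gcongr
  have hdist : dist (p t) (p t + ω⁻¹ • z ω t) ≤ Z / ω := by
    simpa only [dist_self_add_right] using hinv_smul (hZ ω t ht)
  have hball : p t + ω⁻¹ • z ω t ∈ Metric.ball (p t) δ := by
    rw [Metric.mem_ball']
    exact hdist.trans_lt ((div_lt_comm₀ hδ hω).1 hZω)
  calc _ = ‖(f (p t) - f (p t + ω⁻¹ • z ω t)) + ω⁻¹ • w ω t‖ := by rw [hderiv]; congr 1; abel
    _ ≤ L * dist (p t) (p t + ω⁻¹ • z ω t) + W / ω :=
      norm_add_le_of_le ((dist_eq_norm _ _).symm.trans_le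
        (hLδ (p t) (mem_image_of_mem p ht) _ hball)) (hinv_smul (hW ω t ht))
    _ ≤ L * (Z / ω) + W / ω := by gcongr
    _ = (L * Z + W) / ω := by ring
    _ ≤ (|L * Z + W| + 1) / ω :=
      div_le_div_of_nonneg_right ((le_abs_self _).trans (le_add_of_nonneg_right zero_le_one)) hω.le

section Expansion

variable {ι E : Type*} [NormedAddCommGroup E] [NormedSpace ℂ E]

/-- The amplitudes `p_{1,m} = aₘ / (iκₘ)` of the first-order oscillations (`0` where `κₘ = 0`). -/
noncomputable def firstOrderAmplitude (κ : ι → ℝ) (a : ι → ℝ → E) (m : ι) (t : ℝ) : E :=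
  (Complex.I * κ m)⁻¹ • a m t

theorem continuousOn_firstOrderAmplitude (κ : ι → ℝ) {a : ι → ℝ → E} {s : Set ℝ} {m : ι}
    (ha : ContinuousOn (a m) s) : ContinuousOn (firstOrderAmplitude κ a m) s :=
  ha.const_smul _

variable [Fintype ι]

/-- The modulated Fourier sum `∑ₘ e^{iκₘωt} cₘ(t)` with frequencies `κₘω` and amplitudes `cₘ`. -/
noncomputable def modulatedSum (κ : ι → ℝ) (c : ι → ℝ → E) (ω t : ℝ) : E :=
  ∑ m, Complex.exp (Complex.I * κ m * ω * t) • c m t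

theorem norm_modulatedSum_le (κ : ι → ℝ) (c : ι → ℝ → E) (ω t : ℝ) :
    ‖modulatedSum κ c ω t‖ ≤ ∑ m, ‖c m t‖ := by
  refine norm_sum_le_of_le _ fun m _ => ?_
  have hphase : Complex.I * κ m * ω * t = Complex.I * (κ m * ω * t : ℝ) := by push_cast; ring
  rw [norm_smul, hphase, Complex.norm_exp_I_mul_ofReal, one_mul]

theorem exists_norm_add_modulatedSum_le (κ : ι → ℝ) {q : ℝ → E} {c : ι → ℝ → E} {s : Set ℝ}
    (hs : IsCompact s) (hq : ContinuousOn q s) (hc : ∀ m, ContinuousOn (c m) s) :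
    ∃ Q, ∀ ω, ∀ t ∈ s, ‖q t + modulatedSum κ c ω t‖ ≤ Q := by
  obtain ⟨Q, hQ⟩ := hs.exists_bound_of_continuousOn
    (hq.norm.add (continuousOn_finsetSum Finset.univ fun m _ => (hc m).norm))
  exact ⟨Q, fun ω t ht => (norm_add_le_of_le le_rfl (norm_modulatedSum_le κ c ω t)).trans
    ((le_abs_self _).trans (hQ t ht))⟩

variable [NormedSpace ℝ E]

/-- The truncated expansion
`Y₁(t; ω) = p_{0,0}(t) + ω⁻¹ (p_{1,0}(t) + ∑ₘ p_{1,m}(t) e^{iκₘωt})`, as a function of `ω` and `t`;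
the argument `a` enters through `p_{1,m} = aₘ / (iκₘ)`. -/
noncomputable def firstOrderExpansion (κ : ι → ℝ) (a : ι → ℝ → E) (p₀₀ p₁₀ : ℝ → E) (ω t : ℝ) : E :=
  p₀₀ t + ω⁻¹ • (p₁₀ t + modulatedSum κ (firstOrderAmplitude κ a) ω t)

theorem firstOrderExpansion_zero {κ : ι → ℝ} {a : ι → ℝ → E} {p₀₀ p₁₀ : ℝ → E}
    (hp₁₀ : p₁₀ 0 = -∑ m, firstOrderAmplitude κ a m 0) (ω : ℝ) :
    firstOrderExpansion κ a p₀₀ p₁₀ ω 0 = p₀₀ 0 := by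
  simp [firstOrderExpansion, modulatedSum, hp₁₀]

variable [IsScalarTower ℝ ℂ E]

theorem hasDerivWithinAt_modulatedSum (κ : ι → ℝ) {c c' : ι → ℝ → E} {s : Set ℝ} {t : ℝ}
    (hc : ∀ m, HasDerivWithinAt (c m) (c' m t) s t) (ω : ℝ) :
    HasDerivWithinAt (modulatedSum κ c ω)
      (ω • modulatedSum κ (fun m t => (Complex.I * κ m) • c m t) ω t + modulatedSum κ c' ω t)
      s t := by
  have hexp (m : ι) : HasDerivWithinAt (fun t : ℝ => Complex.exp (Complex.I * κ m * ω * t))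
      (Complex.exp (Complex.I * κ m * ω * t) * (Complex.I * κ m * ω)) s t := by
    simpa using ((hasDerivAt_id (t : ℂ)).const_mul
      (Complex.I * κ m * ω)).cexp.comp_ofReal.hasDerivWithinAt
  refine (HasDerivWithinAt.fun_sum fun m _ => (hexp m).fun_smul (hc m)).congr_deriv ?_
  simp only [modulatedSum, Finset.smul_sum, ← Finset.sum_add_distrib]
  refine Finset.sum_congr rfl fun m _ => ?_
  rw [← algebraMap_smul ℂ ω, Complex.coe_algebraMap]
  module

theorem hasDerivWithinAt_modulatedSum_firstOrderAmplitude {κ : ι → ℝ} (hκ : ∀ m, κ m ≠ 0)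
    {a a' : ι → ℝ → E} {s : Set ℝ} {t : ℝ} (ha : ∀ m, HasDerivWithinAt (a m) (a' m t) s t) (ω : ℝ) :
    HasDerivWithinAt (modulatedSum κ (firstOrderAmplitude κ a) ω)
      (ω • modulatedSum κ a ω t + modulatedSum κ (firstOrderAmplitude κ a') ω t) s t := by
  have hI (m : ι) : Complex.I * κ m ≠ 0 :=
    mul_ne_zero Complex.I_ne_zero (Complex.ofReal_ne_zero.2 (hκ m))
  have hcancel : (fun m t => (Complex.I * κ m) • firstOrderAmplitude κ a m t) = a :=
    funext₂ fun m t => smul_inv_smul₀ (hI m) (a m t)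
  simpa only [hcancel] using hasDerivWithinAt_modulatedSum κ
    (c := firstOrderAmplitude κ a) (c' := firstOrderAmplitude κ a')
    (fun m => (ha m).fun_const_smul _) ω

theorem nonlinear_first_order_defect_general {f : E → E} (hf : LocallyLipschitz f)
    {κ : ι → ℝ} (hκ : ∀ m, κ m ≠ 0) {T : ℝ} (hT : 0 < T)
    {a : ι → ℝ → E} (ha : ∀ m, ContDiffOn ℝ 1 (a m) (Icc 0 T))
    {p₀₀ : ℝ → E} (hp₀₀ : ∀ t ∈ Icc 0 T, HasDerivWithinAt p₀₀ (f (p₀₀ t)) (Icc 0 T) t)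
    {p₁₀ : ℝ → E} (hp₁₀ : ContDiffOn ℝ 1 p₁₀ (Icc 0 T))
    (hp₁₀0 : p₁₀ 0 = -∑ m, firstOrderAmplitude κ a m 0) (ω₀ : ℝ) :
    (∃ C > 0, ∃ ω₁ : ℝ, ω₀ ≤ ω₁ ∧ ∀ ω : ℝ, ω₁ ≤ ω → ∀ t ∈ Icc 0 T,
      ‖derivWithin (firstOrderExpansion κ a p₀₀ p₁₀ ω) (Icc 0 T) t
          - f (firstOrderExpansion κ a p₀₀ p₁₀ ω t) - modulatedSum κ a ω t‖ ≤ C / ω) ∧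
    ∀ ω : ℝ, firstOrderExpansion κ a p₀₀ p₁₀ ω 0 = p₀₀ 0 := by
  refine ⟨?_, firstOrderExpansion_zero hp₁₀0⟩
  have hI : UniqueDiffOn ℝ (Icc 0 T) := uniqueDiffOn_Icc hT
  have hderiv {q : ℝ → E} (hq : ContDiffOn ℝ 1 q (Icc 0 T)) {t : ℝ} (ht : t ∈ Icc 0 T) :
      HasDerivWithinAt q (derivWithin q (Icc 0 T) t) (Icc 0 T) t :=
    (hq.differentiableOn one_ne_zero t ht).hasDerivWithinAt
  have hcorrector (ω t : ℝ) (ht : t ∈ Icc 0 T) :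
      HasDerivWithinAt (fun t => p₁₀ t + modulatedSum κ (firstOrderAmplitude κ a) ω t)
        (ω • modulatedSum κ a ω t + (derivWithin p₁₀ (Icc 0 T) t +
          modulatedSum κ (firstOrderAmplitude κ fun m => derivWithin (a m) (Icc 0 T)) ω t))
        (Icc 0 T) t :=
    ((hderiv hp₁₀ ht).fun_add (hasDerivWithinAt_modulatedSum_firstOrderAmplitude hκ
      (fun m => hderiv (ha m) ht) ω)).congr_deriv (add_left_comm _ _ _)
  obtain ⟨C, hC, hdefect⟩ := exists_eventually_norm_defect_le hf isCompact_Icc hI hp₀₀ hcorrector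
    (exists_norm_add_modulatedSum_le κ isCompact_Icc hp₁₀.continuousOn
      fun m => continuousOn_firstOrderAmplitude κ (ha m).continuousOn)
    (exists_norm_add_modulatedSum_le κ isCompact_Icc (hp₁₀.continuousOn_derivWithin hI le_rfl)
      fun m => continuousOn_firstOrderAmplitude κ ((ha m).continuousOn_derivWithin hI le_rfl))
  obtain ⟨ω₁, hω₁⟩ := eventually_atTop.1 hdefect
  exact ⟨C, hC, max ω₀ ω₁, le_max_left _ _, fun ω hω => hω₁ ω ((le_max_right _ _).trans hω)⟩

end Expansion

/-- The defect of the first-order truncated expansion `Y₁` in the nonlinear highly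
oscillatory ODE is `O(ω⁻¹)` uniformly on `[0, T]`, and `Y₁(0; ω) = y₀`. -/
theorem nonlinear_first_order_defect {d M : ℕ} (hd : 1 ≤ d) (hM : 1 ≤ M)
    (f : (Fin d → ℂ) → (Fin d → ℂ)) (hf : ∀ n : ℕ, ContDiff ℝ (n : ℕ∞) f)
    (κ : Fin M → ℝ) (hκ : ∀ m, κ m ≠ 0)
    (a : Fin M → ℝ → Fin d → ℂ) (ha : ∀ m, ∀ n : ℕ, ContDiff ℝ (n : ℕ∞) (a m))
    (y₀ : Fin d → ℂ) (T : ℝ) (hT : 0 < T)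
    (p₀₀ : ℝ → Fin d → ℂ) (hp₀₀0 : p₀₀ 0 = y₀)
    (hp₀₀ : ∀ t ∈ Set.Icc (0 : ℝ) T,
      HasDerivWithinAt p₀₀ (f (p₀₀ t)) (Set.Icc (0 : ℝ) T) t)
    (ω₀ : ℝ) (hω₀ : 0 < ω₀)
    (p₁ : Fin M → ℝ → Fin d → ℂ)
    (hp₁ : ∀ m, ∀ t : ℝ, p₁ m t = (Complex.I * (κ m))⁻¹ • a m t)
    (p₁₀ : ℝ → Fin d → ℂ)
    (hp₁₀0 : p₁₀ 0 = - ∑ m : Fin M, p₁ m 0)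
    (hp₁₀ : ∀ t ∈ Set.Icc (0 : ℝ) T,
      HasDerivWithinAt p₁₀ (fderiv ℝ f (p₀₀ t) (p₁₀ t)) (Set.Icc (0 : ℝ) T) t)
    (Y₁ : ℝ → ℝ → Fin d → ℂ)
    (hY₁ : ∀ ω t : ℝ, Y₁ ω t = p₀₀ t + (ω⁻¹ : ℝ) •
      (p₁₀ t + ∑ m : Fin M, Complex.exp (Complex.I * (κ m) * ω * t) • p₁ m t)) :
    (∃ C > 0, ∃ ω₁ : ℝ, ω₀ ≤ ω₁ ∧ ∀ ω : ℝ, ω₁ ≤ ω → ∀ t ∈ Set.Icc (0 : ℝ) T,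
      ‖derivWithin (Y₁ ω) (Set.Icc (0 : ℝ) T) t - f (Y₁ ω t)
          - ∑ m : Fin M, Complex.exp (Complex.I * (κ m) * ω * t) • a m t‖ ≤ C / ω) ∧
    ∀ ω : ℝ, Y₁ ω 0 = y₀ := by
  obtain rfl : p₁ = firstOrderAmplitude κ a := funext₂ hp₁
  obtain rfl : Y₁ = firstOrderExpansion κ a p₀₀ p₁₀ := funext₂ hY₁
  have hf1 : ContDiff ℝ 1 f := hf 1
  have hp₀₀c : ContinuousOn p₀₀ (Icc 0 T) := fun t ht => (hp₀₀ t ht).continuousWithinAt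
  have hp₁₀c : ContinuousOn p₁₀ (Icc 0 T) := fun t ht => (hp₁₀ t ht).continuousWithinAt
  have hp₁₀1 : ContDiffOn ℝ 1 p₁₀ (Icc 0 T) :=
    contDiffOn_one_of_hasDerivWithinAt (uniqueDiffOn_Icc hT) hp₁₀
      (((hf1.continuous_fderiv one_ne_zero).comp_continuousOn hp₀₀c).clm_apply hp₁₀c)
  exact hp₀₀0 ▸ nonlinear_first_order_defect_general hf1.locallyLipschitz hκ hT
    (fun m => (ha m 1).contDiffOn) hp₀₀ hp₁₀1 hp₁₀0 ω₀
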